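/- arXiv:1106.4676 — 8 statements merged into one kernel-verified Lean document; each statement's English description precedes it below -/
import Mathlib

section
/- Let (X,ρ) be a metric space. Then the weight of the hyperspace (CL(X), W_ρ) is at most the density of X, i.e. w(CL(X), W_ρ) ≤ d(X). -/
/-!
By the Lipschitz estimate `|ρ(x, A) - ρ(d, A)| ≤ ρ(x, d)`, the distance functionals `ρ(d, ·)` with
`d` in a dense set `D` already determine the Wijsman topology, so the sets
`{A | p < ρ(d, A) < q}` with `d ∈ D` and `p q : ℚ` form a subbase
(`wijsman_eq_generateFrom`). It has at most `ℵ₀ + #D` members, and passing to finite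
intersections gives a base that is no larger (`weight_generateFrom_le`).
-/

open Cardinal Set Metric Topology

universe u v

/-- The hyperspace of all nonempty closed subsets of a topological space. -/
def CL (X : Type u) [TopologicalSpace X] : Type u :=
  {A : Set X // A.Nonempty ∧ IsClosed A}

/-- The Wijsman topology on `CL X` determined by a metric `m` on `X`:
the weak (initial) topology determined by the distance functionals
`A ↦ ρ(x, A) = inf {ρ(x,a) : a ∈ A}`, `x ∈ X`. -/
noncomputable def wijsman (X : Type u) [TopologicalSpace X] (m : MetricSpace X) :
    TopologicalSpace (CL X) :=
  ⨅ x : X, TopologicalSpace.induced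
    (fun A : CL X => @Metric.infDist X m.toPseudoMetricSpace x A.1) inferInstance

/-- The lower Vietoris topology on `CL X`, with subbase `{U⁻ : U open}` where
`U⁻ = {A ∈ CL X : A ∩ U ≠ ∅}`. -/
def lowerVietoris (X : Type u) [TopologicalSpace X] : TopologicalSpace (CL X) :=
  TopologicalSpace.generateFrom
    { S | ∃ U : Set X, IsOpen U ∧ S = { A : CL X | (A.1 ∩ U).Nonempty } }

/-- The Vietoris topology on `CL X`, with subbase `{U⁻ : U open} ∪ {U⁺ : U open}`. -/
def vietoris (X : Type u) [TopologicalSpace X] : TopologicalSpace (CL X) :=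
  TopologicalSpace.generateFrom
    ({ S | ∃ U : Set X, IsOpen U ∧ S = { A : CL X | (A.1 ∩ U).Nonempty } } ∪
     { S | ∃ U : Set X, IsOpen U ∧ S = { A : CL X | A.1 ⊆ U } })

/-- The subspace topology on a subset. -/
def subTop {Y : Type u} (t : TopologicalSpace Y) (S : Set Y) : TopologicalSpace ↥S :=
  TopologicalSpace.induced Subtype.val t

section CardinalFunctions

variable (Y : Type u) (t : TopologicalSpace Y)

/-- `ℬ` is a base of the topology `t`. -/
def IsBase (ℬ : Set (Set Y)) : Prop :=
  (∀ U ∈ ℬ, t.IsOpen U) ∧ ∀ U, t.IsOpen U → ∀ x ∈ U, ∃ V ∈ ℬ, x ∈ V ∧ V ⊆ U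

/-- The weight: `ℵ₀` plus the least cardinality of a base. -/
noncomputable def weight : Cardinal.{u} :=
  ℵ₀ + sInf { c : Cardinal.{u} | ∃ ℬ : Set (Set Y), IsBase Y t ℬ ∧ #↥ℬ = c }

/-- The density: `ℵ₀` plus the least cardinality of a dense subset. -/
noncomputable def density : Cardinal.{u} :=
  ℵ₀ + sInf { c : Cardinal.{u} | ∃ D : Set Y, @Dense Y t D ∧ #↥D = c }

/-- A π-base: a family of nonempty open sets such that every nonempty open set
contains a member. -/
def IsPiBase (𝒢 : Set (Set Y)) : Prop :=
  (∀ G ∈ 𝒢, t.IsOpen G ∧ G.Nonempty) ∧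
    ∀ U : Set Y, t.IsOpen U → U.Nonempty → ∃ G ∈ 𝒢, G ⊆ U

/-- The π-weight: `ℵ₀` plus the least cardinality of a π-base. -/
noncomputable def piWeight : Cardinal.{u} :=
  ℵ₀ + sInf { c : Cardinal.{u} | ∃ 𝒢 : Set (Set Y), IsPiBase Y t 𝒢 ∧ #↥𝒢 = c }

/-- A local π-base at `y`: a family of nonempty open sets such that every open
neighborhood of `y` contains a member. -/
def IsLocalPiBase (y : Y) (𝒢 : Set (Set Y)) : Prop :=
  (∀ G ∈ 𝒢, t.IsOpen G ∧ G.Nonempty) ∧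
    ∀ U : Set Y, t.IsOpen U → y ∈ U → ∃ G ∈ 𝒢, G ⊆ U

/-- The π-character at a point. -/
noncomputable def piCharacterAt (y : Y) : Cardinal.{u} :=
  ℵ₀ + sInf { c : Cardinal.{u} | ∃ 𝒢 : Set (Set Y), IsLocalPiBase Y t y 𝒢 ∧ #↥𝒢 = c }

/-- The π-character of the space. -/
noncomputable def piCharacter : Cardinal.{u} := ⨆ y : Y, piCharacterAt Y t y

/-- The pseudocharacter at a point: `ℵ₀` plus the least cardinality of a family of
open sets whose intersection is `{y}`. -/
noncomputable def pseudoCharacterAt (y : Y) : Cardinal.{u} :=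
  ℵ₀ + sInf { c : Cardinal.{u} | ∃ 𝒰 : Set (Set Y),
    (∀ U ∈ 𝒰, t.IsOpen U) ∧ ⋂₀ 𝒰 = {y} ∧ #↥𝒰 = c }

/-- The pseudocharacter of the space. -/
noncomputable def pseudoCharacter : Cardinal.{u} := ⨆ y : Y, pseudoCharacterAt Y t y

/-- The pseudoweight: `ℵ₀` plus the least cardinality of a point-separating family
of open sets. -/
noncomputable def pseudoWeight : Cardinal.{u} :=
  ℵ₀ + sInf { c : Cardinal.{u} | ∃ 𝒰 : Set (Set Y), (∀ U ∈ 𝒰, t.IsOpen U) ∧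
    (∀ x y : Y, x ≠ y → ∃ U ∈ 𝒰, (x ∈ U ∧ y ∉ U) ∨ (y ∈ U ∧ x ∉ U)) ∧ #↥𝒰 = c }

/-- The net weight: `ℵ₀` plus the least cardinality of a network. -/
noncomputable def netWeight : Cardinal.{u} :=
  ℵ₀ + sInf { c : Cardinal.{u} | ∃ 𝒩 : Set (Set Y),
    (∀ U : Set Y, t.IsOpen U → ∀ x ∈ U, ∃ M ∈ 𝒩, x ∈ M ∧ M ⊆ U) ∧ #↥𝒩 = c }

/-- The tightness at a point. -/
noncomputable def tightnessAt (y : Y) : Cardinal.{u} :=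
  ℵ₀ + sInf { κ : Cardinal.{u} | ∀ A : Set Y, y ∈ @closure Y t A →
      ∃ B ⊆ A, #↥B ≤ κ ∧ y ∈ @closure Y t B }

/-- The tightness of the space. -/
noncomputable def tightness : Cardinal.{u} := ⨆ y : Y, tightnessAt Y t y

/-- The Lindelöf number. -/
noncomputable def lindelofNumber : Cardinal.{u} :=
  ℵ₀ + sInf { κ : Cardinal.{u} | ∀ 𝒞 : Set (Set Y), (∀ U ∈ 𝒞, t.IsOpen U) →
      ⋃₀ 𝒞 = Set.univ → ∃ 𝒟 ⊆ 𝒞, #↥𝒟 ≤ κ ∧ ⋃₀ 𝒟 = Set.univ }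

/-- The extent: `ℵ₀` plus the supremum of the cardinalities of closed discrete
subspaces. -/
noncomputable def extent : Cardinal.{u} :=
  ℵ₀ + sSup { c : Cardinal.{u} | ∃ D : Set Y, @IsClosed Y t D ∧
    @DiscreteTopology ↥D (subTop t D) ∧ #↥D = c }

/-- The spread: `ℵ₀` plus the supremum of the cardinalities of discrete subspaces. -/
noncomputable def spread : Cardinal.{u} :=
  ℵ₀ + sSup { c : Cardinal.{u} | ∃ D : Set Y,
    @DiscreteTopology ↥D (subTop t D) ∧ #↥D = c }

/-- The diagonal degree: `ℵ₀` plus the least cardinality of a family of open subsets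
of `Y × Y` whose intersection is the diagonal. -/
noncomputable def diagonalDegree : Cardinal.{u} :=
  ℵ₀ + sInf { c : Cardinal.{u} | ∃ 𝒢 : Set (Set (Y × Y)),
    (∀ G ∈ 𝒢, @IsOpen (Y × Y) (@instTopologicalSpaceProd Y Y t t) G) ∧
    ⋂₀ 𝒢 = { p : Y × Y | p.1 = p.2 } ∧ #↥𝒢 = c }

/-- The uniform weight: `ℵ₀` plus the least cardinality of a base of a compatible
uniformity. -/
noncomputable def uniformWeight : Cardinal.{u} :=
  ℵ₀ + sInf { c : Cardinal.{u} | ∃ U : UniformSpace Y, U.toTopologicalSpace = t ∧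
    ∃ 𝒲 : Set (Set (Y × Y)), (∀ W ∈ 𝒲, W ∈ @uniformity Y U) ∧
      (∀ s ∈ @uniformity Y U, ∃ W ∈ 𝒲, W ⊆ s) ∧ #↥𝒲 = c }

/-- The weak weight: the least weight of a Tychonoff space onto which `Y` maps by a
continuous bijection. -/
noncomputable def weakWeight : Cardinal.{u} :=
  sInf { c : Cardinal.{u} | ∃ (Z : Type u) (s : TopologicalSpace Z) (f : Y → Z),
    @T35Space Z s ∧ @Continuous Y Z t s f ∧ Function.Bijective f ∧ weight Z s = c }

end CardinalFunctions

/-- The hereditary version of a cardinal function: the supremum over all subspaces. -/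
noncomputable def hered (f : (Z : Type u) → TopologicalSpace Z → Cardinal.{u})
    (Y : Type u) (t : TopologicalSpace Y) : Cardinal.{u} :=
  ⨆ S : Set Y, f ↥S (subTop t S)

/-- A topology with subbase `s` has weight at most `ℵ₀ + #s`. -/
lemma weight_generateFrom_le {Y : Type u} (s : Set (Set Y)) :
    weight Y (TopologicalSpace.generateFrom s) ≤ ℵ₀ + #s := by
  let _ : TopologicalSpace Y := TopologicalSpace.generateFrom s
  have hb := TopologicalSpace.isTopologicalBasis_of_subbasis (s := s) rfl
  set B : Set (Set Y) := (fun f => ⋂₀ f) '' {f : Set (Set Y) | f.Finite ∧ f ⊆ s}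
  have hB : IsBase Y (TopologicalSpace.generateFrom s) B :=
    ⟨fun U hU => hb.isOpen hU, fun U hU x hx => hb.exists_subset_of_mem_open hx hU⟩
  -- Finite subfamilies of `s` are enumerated by lists, whose number is easy to bound.
  have hsub : B ⊆ range (fun l : List s => ⋂₀ (Subtype.val '' {x : s | x ∈ l})) := by
    rintro _ ⟨f, ⟨hf, hfs⟩, rfl⟩
    lift f to Set s using hfs
    have hf' : f.Finite := hf.of_finite_image Subtype.val_injective.injOn
    refine ⟨hf'.toFinset.toList, ?_⟩
    simp
  have hcard : #B ≤ ℵ₀ + #s :=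
    calc #B ≤ _ := mk_le_mk_of_subset hsub
      _ ≤ #(List s) := mk_range_le
      _ ≤ max ℵ₀ #s := mk_list_le_max _
      _ ≤ ℵ₀ + #s := max_le (self_le_add_right _ _) (self_le_add_left _ _)
  have hw : sInf {c : Cardinal.{u} | ∃ ℬ : Set (Set Y),
      IsBase Y (TopologicalSpace.generateFrom s) ℬ ∧ #ℬ = c} ≤ #B := csInf_le' ⟨B, hB, rfl⟩
  calc weight Y (TopologicalSpace.generateFrom s) ≤ ℵ₀ + #B := add_le_add_right hw _
    _ ≤ ℵ₀ + (ℵ₀ + #s) := add_le_add_right hcard _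
    _ = ℵ₀ + #s := by rw [← add_assoc, aleph0_add_aleph0]

/-- The set of closed sets `A` with `p < ρ(d, A) < q`, indexed by `(d, p, q)`. -/
def wijsmanSubbasic {X : Type u} [MetricSpace X] (D : Set X) (i : D × ℚ × ℚ) : Set (CL X) :=
  {A | infDist (i.1 : X) A.1 ∈ Ioo (i.2.1 : ℝ) i.2.2}

/-- Distances to the points of a dense set, cut at rational values, generate the Wijsman
topology. -/
lemma wijsman_eq_generateFrom {X : Type u} [m : MetricSpace X] {D : Set X} (hD : Dense D) :
    wijsman X m = TopologicalSpace.generateFrom (range (wijsmanSubbasic D)) := by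
  apply le_antisymm
  · rw [TopologicalSpace.le_generateFrom_iff_subset_isOpen]
    rintro _ ⟨⟨d, p, q⟩, rfl⟩
    exact iInf_le (fun x : X => TopologicalSpace.induced
      (fun A : CL X => infDist x A.1) inferInstance) d.1 _ ⟨_, isOpen_Ioo, rfl⟩
  · refine le_iInf fun x => ?_
    rw [← continuous_iff_le_induced]
    let _ : TopologicalSpace (CL X) :=
      TopologicalSpace.generateFrom (range (wijsmanSubbasic D))
    rw [Metric.continuous_iff']
    intro A ε hε
    obtain ⟨d, hd, hxd⟩ := hD.exists_dist_lt x (show 0 < ε / 4 by positivity)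
    obtain ⟨p, hp, hp'⟩ := exists_rat_btwn (show infDist d A.1 - ε / 4 < infDist d A.1 by linarith)
    obtain ⟨q, hq, hq'⟩ := exists_rat_btwn (show infDist d A.1 < infDist d A.1 + ε / 4 by linarith)
    have hopen : IsOpen (wijsmanSubbasic D (⟨d, hd⟩, p, q)) :=
      TopologicalSpace.isOpen_generateFrom_of_mem ⟨_, rfl⟩
    have hA : A ∈ wijsmanSubbasic D (⟨d, hd⟩, p, q) := ⟨hp', hq⟩
    filter_upwards [hopen.mem_nhds hA] with B hB
    have h1 : (p : ℝ) < infDist d B.1 := hB.1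
    have h2 : infDist d B.1 < q := hB.2
    have a1 := infDist_le_infDist_add_dist (s := A.1) (x := x) (y := d)
    have a2 := infDist_le_infDist_add_dist (s := A.1) (x := d) (y := x)
    have b1 := infDist_le_infDist_add_dist (s := B.1) (x := x) (y := d)
    have b2 := infDist_le_infDist_add_dist (s := B.1) (x := d) (y := x)
    rw [dist_comm d x] at a2 b2
    rw [Real.dist_eq, abs_lt]
    constructor <;> linarith

/-- For a metric space `(X,ρ)`, `w(CL(X),W_ρ) ≤ d(X)`. -/
theorem stmt_0 (X : Type u) [MetricSpace X] :
    weight (CL X) (wijsman X ‹MetricSpace X›) ≤ density X inferInstance := by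
  -- The infimum defining the density is attained.
  obtain ⟨D, hD, hDc⟩ := csInf_mem
    (show {c : Cardinal.{u} | ∃ D : Set X, Dense D ∧ #D = c}.Nonempty from
      ⟨_, univ, dense_univ, rfl⟩)
  have hι : #(D × ℚ × ℚ) ≤ ℵ₀ + #D := by
    have hQ : #(ℚ × ℚ) = ℵ₀ := mk_eq_aleph0 _
    rw [mk_prod, hQ, lift_aleph0, lift_uzero]
    refine (mul_le_max _ _).trans (max_le (max_le ?_ ?_) ?_)
    · exact self_le_add_left _ _
    · exact self_le_add_right _ _
    · exact self_le_add_right _ _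
  rw [wijsman_eq_generateFrom hD]
  calc _ ≤ ℵ₀ + #(range (wijsmanSubbasic D)) := weight_generateFrom_le _
    _ ≤ ℵ₀ + (ℵ₀ + #D) := add_le_add_right (mk_range_le.trans hι) _
    _ = ℵ₀ + #D := by rw [← add_assoc, aleph0_add_aleph0]
    _ = density X inferInstance := by rw [hDc]; rfl
end

section
/- Let X be a nonempty topological space. Then ψ(X, CL(X), V⁻) = π(X) = πχ(X, CL(X), V⁻) = πχ(CL(X), V⁻); that is, the pseudocharacter of the point X in (CL(X), V⁻), the π-weight of X, the π-character of the point X in (CL(X), V⁻), and the π-character of the space (CL(X), V⁻) all coincide. -/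
/-! Write `U⁻` for the closed sets meeting `U`, and for a finite family `F` of open sets let
`hitAll F = ⋂_{U ∈ F} U⁻`; these sets form a base of the lower Vietoris topology
(`exists_hitAll_subset`).

Upper bounds: if `𝒢` is a π-base of `X`, then a closed set meeting all members of `𝒢` is dense,
so `{G⁻ : G ∈ 𝒢}` has intersection `{X}`; and shrinking each member of `F` to a member of `𝒢`
shows that the sets `hitAll F'`, `F' ⊆ 𝒢` finite, form a local π-base at every point of `CL X`
(they are nonempty because they contain `X`).

Lower bounds: both a family of open sets with intersection `{X}` and a local π-base at `X` are
families `𝒰` of nonempty open sets such that every nonempty closed `A ≠ X` is missed by some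
member of `𝒰` (for a local π-base, take a member inside `(X \ A)⁻`). Choosing
`hitAll (F S) ⊆ S` for each `S ∈ 𝒰`, the union of the families `F S` together with `X` is a π-base
of `X`: for open `V ≠ ∅, X`, some `S ∈ 𝒰` misses `X \ V`, so some `U ∈ F S` misses `X \ V`,
that is, `U ⊆ V`. This is `piWeight_le_of_separating`. -/

open Cardinal Set Metric Topology

universe u v

/-- The closed sets meeting every member of `F`, i.e. `⋂_{U ∈ F} U⁻`. -/
def hitAll {X : Type u} [TopologicalSpace X] (F : Set (Set X)) : Set (CL X) :=
  {A | ∀ U ∈ F, (A.1 ∩ U).Nonempty}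

lemma isOpen_hit {X : Type u} [TopologicalSpace X] {U : Set X} (hU : IsOpen U) :
    (lowerVietoris X).IsOpen {A : CL X | (A.1 ∩ U).Nonempty} :=
  TopologicalSpace.GenerateOpen.basic _ ⟨U, hU, rfl⟩

lemma isOpen_hitAll {X : Type u} [TopologicalSpace X] {F : Set (Set X)} (hF : F.Finite)
    (ho : ∀ U ∈ F, IsOpen U) : (lowerVietoris X).IsOpen (hitAll F) := by
  have h : hitAll F = ⋂ U ∈ F, {A : CL X | (A.1 ∩ U).Nonempty} := by
    ext A; simp [hitAll]
  rw [h]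
  let _ := lowerVietoris X
  exact hF.isOpen_biInter fun U hU => isOpen_hit (ho U hU)

/-- The sets `hitAll F`, with `F` a finite family of open sets, form a base of the lower Vietoris
topology. -/
lemma exists_hitAll_subset {X : Type u} [TopologicalSpace X] {S : Set (CL X)}
    (hS : (lowerVietoris X).IsOpen S) {A : CL X} (hA : A ∈ S) :
    ∃ F : Set (Set X), F.Finite ∧ (∀ U ∈ F, IsOpen U) ∧ A ∈ hitAll F ∧ hitAll F ⊆ S := by
  induction (show TopologicalSpace.GenerateOpen _ S from hS) with
  | basic s hs =>
    obtain ⟨U, hU, rfl⟩ := hs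
    exact ⟨{U}, finite_singleton U, by simpa using hU, by simpa [hitAll] using hA,
      fun B hB => hB U rfl⟩
  | univ => exact ⟨∅, finite_empty, by simp, by simp [hitAll], subset_univ _⟩
  | inter s t hs ht ihs iht =>
    obtain ⟨F, hF, hFo, hFA, hFs⟩ := ihs hs hA.1
    obtain ⟨G, hG, hGo, hGA, hGt⟩ := iht ht hA.2
    refine ⟨F ∪ G, hF.union hG, ?_, ?_, ?_⟩
    · rintro U (h | h)
      exacts [hFo U h, hGo U h]
    · rintro U (h | h)
      exacts [hFA U h, hGA U h]
    · exact fun B hB => ⟨hFs fun U h => hB U (Or.inl h), hGt fun U h => hB U (Or.inr h)⟩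
  | sUnion 𝒯 h𝒯 ih =>
    obtain ⟨T, hT, hAT⟩ := hA
    obtain ⟨F, hF, hFo, hFA, hFT⟩ := ih T hT (h𝒯 T hT) hAT
    exact ⟨F, hF, hFo, hFA, hFT.trans (subset_sUnion_of_mem hT)⟩

/-- A family of nonempty open sets of `CL X` such that each point other than `X` is missed by
some member is, up to `ℵ₀`, at least as large as the π-weight of `X`. -/
lemma piWeight_le_of_separating {X : Type u} [TopologicalSpace X] [Nonempty X]
    {𝒰 : Set (Set (CL X))} (ho : ∀ S ∈ 𝒰, (lowerVietoris X).IsOpen S ∧ S.Nonempty)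
    (hsep : ∀ A : CL X, A.1 ≠ Set.univ → ∃ S ∈ 𝒰, A ∉ S) :
    piWeight X ‹TopologicalSpace X› ≤ ℵ₀ + #↥𝒰 := by
  have key : ∀ S : 𝒰, ∃ F : Set (Set X), F.Finite ∧ (∀ U ∈ F, IsOpen U ∧ U.Nonempty) ∧
      hitAll F ⊆ S.1 := by
    rintro ⟨S, hS⟩
    obtain ⟨hSo, A, hA⟩ := ho S hS
    obtain ⟨F, hF, hFo, hFA, hFS⟩ := exists_hitAll_subset hSo hA
    exact ⟨F, hF, fun U hU => ⟨hFo U hU, (hFA U hU).mono inter_subset_right⟩, hFS⟩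
  choose F hF hFo hFS using key
  have hbase : IsPiBase X ‹_› ({Set.univ} ∪ ⋃ S, F S) := by
    constructor
    · rintro G (rfl | hG)
      · exact ⟨isOpen_univ, univ_nonempty⟩
      · obtain ⟨S, hS⟩ := mem_iUnion.1 hG
        exact hFo S G hS
    · intro V hV hVn
      by_cases hVu : V = Set.univ
      · exact ⟨Set.univ, Or.inl rfl, hVu.ge⟩
      · obtain ⟨S, hS, hmiss⟩ := hsep ⟨Vᶜ, nonempty_compl.2 hVu, isClosed_compl_iff.2 hV⟩
          fun h => hVn.ne_empty (compl_univ_iff.1 h)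
        have hnot : ¬ ∀ U ∈ F ⟨S, hS⟩, (Vᶜ ∩ U).Nonempty := fun h => hmiss (hFS ⟨S, hS⟩ h)
        push Not at hnot
        obtain ⟨U, hU, hUV⟩ := hnot
        refine ⟨U, Or.inr (mem_iUnion.2 ⟨_, hU⟩), fun x hx => ?_⟩
        by_contra hxV
        exact (hUV.le ⟨hxV, hx⟩ : x ∈ (∅ : Set X))
  have hcard : #↥({Set.univ} ∪ ⋃ S, F S : Set (Set X)) ≤ ℵ₀ + #↥𝒰 := by
    have hinf : ℵ₀ ≤ ℵ₀ + #↥𝒰 := self_le_add_right _ _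
    refine (mk_union_le _ _).trans (add_le_of_le hinf ?_ ?_)
    · exact ((finite_singleton _).lt_aleph0).le.trans hinf
    · refine (mk_iUnion_le F).trans (mul_le_of_le hinf (self_le_add_left _ _) ?_)
      exact ciSup_le' fun S => ((hF S).lt_aleph0).le.trans hinf
  unfold piWeight
  exact add_le_of_le (self_le_add_right _ _) (self_le_add_right _ _)
    (le_trans (csInf_le' ⟨_, hbase, rfl⟩) hcard)

lemma exists_piBase (X : Type u) [TopologicalSpace X] :
    ∃ 𝒢 : Set (Set X), IsPiBase X ‹_› 𝒢 ∧ ℵ₀ + #↥𝒢 = piWeight X ‹_› := by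
  have hne : { c : Cardinal.{u} | ∃ 𝒢 : Set (Set X), IsPiBase X ‹_› 𝒢 ∧ #↥𝒢 = c }.Nonempty :=
    ⟨_, {G | IsOpen G ∧ G.Nonempty}, ⟨fun _ h => h, fun U hU hn => ⟨U, ⟨hU, hn⟩, subset_rfl⟩⟩, rfl⟩
  obtain ⟨𝒢, h𝒢, hc⟩ := csInf_mem hne
  exact ⟨𝒢, h𝒢, by rw [hc, piWeight]⟩

/-- The sets `G⁻`, for `G` in a π-base, have intersection `{X}`. -/
lemma sInter_hit_piBase {X : Type u} [TopologicalSpace X] [Nonempty X] {𝒢 : Set (Set X)}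
    (h𝒢 : IsPiBase X ‹_› 𝒢) :
    ⋂₀ ((fun G => {A : CL X | (A.1 ∩ G).Nonempty}) '' 𝒢) =
      {⟨Set.univ, Set.univ_nonempty, isClosed_univ⟩} := by
  ext A
  simp only [sInter_image, mem_iInter, mem_ofPred_eq]
  constructor
  · intro h
    refine Subtype.ext ?_
    by_contra hA
    obtain ⟨G, hG, hGA⟩ := h𝒢.2 A.1ᶜ A.2.2.isOpen_compl (nonempty_compl.2 hA)
    obtain ⟨x, hxA, hxG⟩ := h G hG
    exact hGA hxG hxA
  · rintro rfl G hG
    simpa using (h𝒢.1 G hG).2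

lemma pseudoCharacterAt_le_piWeight (X : Type u) [TopologicalSpace X] [Nonempty X] :
    pseudoCharacterAt (CL X) (lowerVietoris X)
        ⟨Set.univ, Set.univ_nonempty, isClosed_univ⟩ ≤ piWeight X ‹TopologicalSpace X› := by
  obtain ⟨𝒢, h𝒢, hc⟩ := exists_piBase X
  rw [← hc]
  unfold pseudoCharacterAt
  refine add_le_add le_rfl ?_
  refine le_trans (csInf_le' ⟨_, ?_, sInter_hit_piBase h𝒢, rfl⟩) mk_image_le
  rintro _ ⟨G, hG, rfl⟩
  exact isOpen_hit (h𝒢.1 G hG).1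

lemma piWeight_le_pseudoCharacterAt (X : Type u) [TopologicalSpace X] [Nonempty X] :
    piWeight X ‹TopologicalSpace X› ≤ pseudoCharacterAt (CL X) (lowerVietoris X)
        ⟨Set.univ, Set.univ_nonempty, isClosed_univ⟩ := by
  -- The infimum is attained because families with intersection `{X}` exist.
  have hne : { c : Cardinal.{u} | ∃ 𝒰 : Set (Set (CL X)),
      (∀ U ∈ 𝒰, (lowerVietoris X).IsOpen U) ∧
      ⋂₀ 𝒰 = {⟨Set.univ, Set.univ_nonempty, isClosed_univ⟩} ∧ #↥𝒰 = c }.Nonempty := by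
    obtain ⟨𝒢, h𝒢, -⟩ := exists_piBase X
    refine ⟨_, _, ?_, sInter_hit_piBase h𝒢, rfl⟩
    rintro _ ⟨G, hG, rfl⟩
    exact isOpen_hit (h𝒢.1 G hG).1
  obtain ⟨𝒰, ho, hI, hc⟩ := csInf_mem hne
  unfold pseudoCharacterAt
  rw [← hc]
  refine piWeight_le_of_separating
    (fun S hS => ⟨ho S hS, _, mem_sInter.1 (hI.ge (mem_singleton _)) S hS⟩) fun A hA => ?_
  by_contra! h
  exact hA (congrArg Subtype.val (hI.le (mem_sInter.2 h)))

lemma piCharacterAt_le_piWeight {X : Type u} [TopologicalSpace X] [Nonempty X] (A : CL X) :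
    piCharacterAt (CL X) (lowerVietoris X) A ≤ piWeight X ‹TopologicalSpace X› := by
  obtain ⟨𝒢, h𝒢, hc⟩ := exists_piBase X
  rw [← hc]
  have hinf : ℵ₀ ≤ ℵ₀ + #↥𝒢 := self_le_add_right _ _
  have hbase : IsLocalPiBase (CL X) (lowerVietoris X) A
      (Set.range fun F : Finset 𝒢 => hitAll (Subtype.val '' (F : Set 𝒢))) := by
    constructor
    · rintro _ ⟨F, rfl⟩
      refine ⟨isOpen_hitAll (F.finite_toSet.image _) ?_,
        ⟨Set.univ, Set.univ_nonempty, isClosed_univ⟩, ?_⟩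
      · rintro _ ⟨G, -, rfl⟩
        exact (h𝒢.1 G.1 G.2).1
      · rintro _ ⟨G, -, rfl⟩
        simpa using (h𝒢.1 G.1 G.2).2
    · intro S hS hA
      obtain ⟨F, hF, hFo, hFA, hFS⟩ := exists_hitAll_subset hS hA
      have hshrink : ∀ U : F, ∃ G : 𝒢, G.1 ⊆ U.1 := fun U => by
        obtain ⟨G, hG, hGU⟩ := h𝒢.2 U.1 (hFo U.1 U.2) ((hFA U.1 U.2).mono inter_subset_right)
        exact ⟨⟨G, hG⟩, hGU⟩
      choose g hg using hshrink
      have := hF.to_subtype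
      refine ⟨_, ⟨(Set.finite_range g).toFinset, rfl⟩, fun B hB => hFS fun U hU => ?_⟩
      exact (hB (g ⟨U, hU⟩).1 ⟨_, by simp, rfl⟩).mono (inter_subset_inter_right _ (hg ⟨U, hU⟩))
  unfold piCharacterAt
  refine add_le_of_le hinf hinf (le_trans (csInf_le' ⟨_, hbase, rfl⟩) (mk_range_le.trans ?_))
  rcases finite_or_infinite 𝒢 with h | h
  · exact (lt_aleph0_of_finite _).le.trans hinf
  · rw [mk_finset_of_infinite]
    exact self_le_add_left _ _

lemma piWeight_le_piCharacterAt (X : Type u) [TopologicalSpace X] [Nonempty X] :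
    piWeight X ‹TopologicalSpace X› ≤ piCharacterAt (CL X) (lowerVietoris X)
        ⟨Set.univ, Set.univ_nonempty, isClosed_univ⟩ := by
  -- The infimum is attained because all nonempty open sets form a local π-base.
  have hne : { c : Cardinal.{u} | ∃ 𝒢 : Set (Set (CL X)), IsLocalPiBase (CL X) (lowerVietoris X)
      ⟨Set.univ, Set.univ_nonempty, isClosed_univ⟩ 𝒢 ∧ #↥𝒢 = c }.Nonempty :=
    ⟨_, {S | (lowerVietoris X).IsOpen S ∧ S.Nonempty},
      ⟨fun _ h => h, fun S hS hn => ⟨S, ⟨hS, _, hn⟩, subset_rfl⟩⟩, rfl⟩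
  obtain ⟨𝒰, hU, hc⟩ := csInf_mem hne
  unfold piCharacterAt
  rw [← hc]
  refine piWeight_le_of_separating hU.1 fun A hA => ?_
  obtain ⟨S, hS, hSA⟩ := hU.2 _ (isOpen_hit A.2.2.isOpen_compl)
    ((nonempty_compl.2 hA).imp fun x hx => ⟨mem_univ x, hx⟩)
  refine ⟨S, hS, fun hAS => ?_⟩
  obtain ⟨x, hx, hx'⟩ := hSA hAS
  exact hx' hx

/-- `ψ(X, CL(X), V⁻) = π(X) = πχ(X, CL(X), V⁻) = πχ(CL(X), V⁻)`. -/
theorem stmt_2 (X : Type u) [TopologicalSpace X] [Nonempty X] :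
    pseudoCharacterAt (CL X) (lowerVietoris X)
        ⟨Set.univ, Set.univ_nonempty, isClosed_univ⟩ = piWeight X ‹TopologicalSpace X› ∧
    piWeight X ‹TopologicalSpace X› =
      piCharacterAt (CL X) (lowerVietoris X)
        ⟨Set.univ, Set.univ_nonempty, isClosed_univ⟩ ∧
    piCharacterAt (CL X) (lowerVietoris X)
        ⟨Set.univ, Set.univ_nonempty, isClosed_univ⟩ =
      piCharacter (CL X) (lowerVietoris X) := by
  have hπ := le_antisymm (piWeight_le_piCharacterAt X) (piCharacterAt_le_piWeight _)
  refine ⟨le_antisymm (pseudoCharacterAt_le_piWeight X) (piWeight_le_pseudoCharacterAt X), hπ, ?_⟩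
  refine le_antisymm (le_ciSup (f := piCharacterAt (CL X) (lowerVietoris X))
    Cardinal.bddAbove_of_small _) ?_
  rw [← hπ]
  exact ciSup_le' piCharacterAt_le_piWeight
end

section
/- Let (X,ρ) be a nonempty metric space. Then d(X) ≤ t(X, CL(X), V⁻) ≤ t(CL(X), W_ρ); that is, the density of X is at most the tightness of the point X in (CL(X), V⁻), which in turn is at most the tightness of the space (CL(X), W_ρ). -/
/-!
For the first inequality, the family of nonempty finite subsets of `X` accumulates at the point `X`
in the lower Vietoris topology. If a subfamily `B` still accumulates at `X`, then every nonempty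
open set meets a member of `B`, so `⋃ B` is dense; and `⋃ B` has cardinality at most `ℵ₀ + #B`
because the members are finite (`density_le_tightnessAt`).

For the second, the Wijsman and lower Vietoris topologies have the same neighborhoods of the
point `X` (`nhds_univ_eq`): since `ρ(x, X) = 0`, basic Wijsman neighborhoods of `X` are given by
conditions `ρ(x, A) < ε`, and `ρ(x, A) < ε` says exactly that `A` meets the ball `B(x, ε)`.
Tightness at a point depends only on the neighborhood filter of that point.
-/

open Cardinal Set Metric Topology

universe u v

/-- The point `X` of the hyperspace `CL X`. -/
def univCL (X : Type u) [TopologicalSpace X] [Nonempty X] : CL X :=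
  ⟨Set.univ, Set.univ_nonempty, isClosed_univ⟩

/-- The infimum defining the tightness at a point is attained. -/
lemma tightnessAt_spec (Y : Type u) (t : TopologicalSpace Y) (y : Y) (A : Set Y)
    (hA : y ∈ @closure Y t A) :
    ∃ B ⊆ A, ℵ₀ + #↥B ≤ tightnessAt Y t y ∧ y ∈ @closure Y t B := by
  have hne : { κ : Cardinal.{u} | ∀ A : Set Y, y ∈ @closure Y t A →
      ∃ B ⊆ A, #↥B ≤ κ ∧ y ∈ @closure Y t B }.Nonempty :=
    ⟨#Y, fun A hA => ⟨A, subset_rfl, mk_set_le A, hA⟩⟩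
  obtain ⟨B, hBA, hB, hy⟩ := csInf_mem hne A hA
  exact ⟨B, hBA, add_le_add le_rfl hB, hy⟩

lemma tightnessAt_congr (Y : Type u) (t s : TopologicalSpace Y) (y : Y)
    (h : @nhds Y t y = @nhds Y s y) : tightnessAt Y t y = tightnessAt Y s y := by
  have hc : ∀ A : Set Y, y ∈ @closure Y t A ↔ y ∈ @closure Y s A := fun A => by
    rw [@mem_closure_iff_clusterPt Y t, @mem_closure_iff_clusterPt Y s]
    unfold ClusterPt
    rw [h]
  simp only [tightnessAt, hc]

lemma nhds_lowerVietoris (X : Type u) [TopologicalSpace X] (A : CL X) :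
    @nhds (CL X) (lowerVietoris X) A =
      ⨅ U : {U : Set X // IsOpen U ∧ (A.1 ∩ U).Nonempty},
        Filter.principal { C : CL X | (C.1 ∩ U.1).Nonempty } := by
  rw [lowerVietoris, TopologicalSpace.nhds_generateFrom]
  apply le_antisymm
  · refine le_iInf fun U => iInf₂_le _ ?_
    exact ⟨U.2.2, U.1, U.2.1, rfl⟩
  · refine le_iInf₂ ?_
    rintro S ⟨hAS, U, hU, rfl⟩
    exact iInf_le_of_le ⟨U, hU, hAS⟩ le_rfl

lemma nhds_univ_eq (X : Type u) [m : MetricSpace X] [Nonempty X] :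
    @nhds (CL X) (lowerVietoris X) (univCL X) = @nhds (CL X) (wijsman X m) (univCL X) := by
  have hW : @nhds (CL X) (wijsman X m) (univCL X) =
      ⨅ x : X, Filter.comap (fun A : CL X => infDist x A.1) (𝓝 0) := by
    rw [wijsman, nhds_iInf]
    refine iInf_congr fun x => ?_
    rw [nhds_induced]
    congr 2
    exact infDist_zero_of_mem (Set.mem_univ x)
  rw [hW, nhds_lowerVietoris]
  apply le_antisymm
  · refine le_iInf fun x => ?_
    rw [(Metric.nhds_basis_ball.comap _).ge_iff]
    intro ε hε
    refine Filter.mem_iInf_of_mem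
      ⟨ball x ε, isOpen_ball, x, Set.mem_univ x, mem_ball_self hε⟩ ?_
    rw [Filter.mem_principal]
    rintro C ⟨c, hc, hcx⟩
    have h1 : infDist x C.1 < ε :=
      (infDist_le_dist_of_mem hc).trans_lt (by rwa [dist_comm])
    simpa [abs_of_nonneg (infDist_nonneg (x := x) (s := C.1))] using h1
  · refine le_iInf ?_
    rintro ⟨U, hU, x, -, hx⟩
    obtain ⟨ε, hε, hball⟩ := Metric.isOpen_iff.1 hU x hx
    refine iInf_le_of_le x ?_
    rw [Filter.le_principal_iff]
    refine ⟨Set.Iio ε, Iio_mem_nhds hε, fun C hC => ?_⟩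
    obtain ⟨c, hc, hcx⟩ := (infDist_lt_iff C.2.1).1 hC
    exact ⟨c, hc, hball (by rwa [mem_ball, dist_comm])⟩

/-- Finitely many nonempty open sets are met simultaneously by a finite set of chosen points. -/
lemma univ_mem_closure_finite (X : Type u) [MetricSpace X] [Nonempty X] :
    univCL X ∈ @closure (CL X) (lowerVietoris X) {A : CL X | A.1.Finite} := by
  let tV := lowerVietoris X
  rw [mem_closure_iff_nhds]
  intro S hS
  rw [nhds_lowerVietoris, Filter.mem_iInf] at hS
  obtain ⟨I, hI, V, hV, rfl⟩ := hS
  have hpt : ∀ U : {U : Set X // IsOpen U ∧ ((univCL X).1 ∩ U).Nonempty}, ∃ x, x ∈ U.1 :=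
    fun U => U.2.2.imp fun _ h => h.2
  choose p hp using hpt
  obtain ⟨x₀⟩ := ‹Nonempty X›
  -- `x₀` only keeps the set nonempty when no open set is prescribed.
  have hfin : (insert x₀ (p '' I)).Finite := (hI.image p).insert x₀
  refine ⟨⟨insert x₀ (p '' I), Set.insert_nonempty _ _, hfin.isClosed⟩, ?_, hfin⟩
  refine Set.mem_iInter.2 fun i => hV i ?_
  exact ⟨p i.1, Or.inr ⟨i.1, i.2, rfl⟩, hp i.1⟩

lemma density_le_tightnessAt (X : Type u) [MetricSpace X] [Nonempty X] :
    density X inferInstance ≤ tightnessAt (CL X) (lowerVietoris X) (univCL X) := by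
  obtain ⟨B, hBfin, hB, hcl⟩ := tightnessAt_spec _ _ _ _ (univ_mem_closure_finite X)
  refine le_trans ?_ hB
  have hdense : Dense (⋃ A : B, A.1.1) := by
    rw [dense_iff_inter_open]
    rintro U hU ⟨x, hx⟩
    have hmem : { C : CL X | (C.1 ∩ U).Nonempty } ∈
        @nhds (CL X) (lowerVietoris X) (univCL X) := by
      rw [nhds_lowerVietoris]
      exact Filter.mem_iInf_of_mem ⟨U, hU, x, Set.mem_univ x, hx⟩ (Filter.mem_principal_self _)
    obtain ⟨C, ⟨c, hcC, hcU⟩, hCB⟩ :=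
      (@mem_closure_iff_nhds (CL X) (lowerVietoris X) _ _).1 hcl _ hmem
    exact ⟨c, hcU, Set.mem_iUnion.2 ⟨⟨C, hCB⟩, hcC⟩⟩
  have hcard : #(⋃ A : B, A.1.1) ≤ ℵ₀ + #B := by
    have hsup : ⨆ A : B, #(A.1.1) ≤ ℵ₀ :=
      ciSup_le' fun A => (Set.Finite.lt_aleph0 (hBfin A.2)).le
    calc #(⋃ A : B, A.1.1) ≤ #B * ⨆ A : B, #(A.1.1) := mk_iUnion_le _
      _ ≤ #B * ℵ₀ := mul_le_mul_right hsup _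
      _ ≤ max (max #B ℵ₀) ℵ₀ := mul_le_max _ _
      _ ≤ ℵ₀ + #B := by simp
  calc density X inferInstance ≤ ℵ₀ + #(⋃ A : B, A.1.1) :=
        add_le_add le_rfl (csInf_le' ⟨_, hdense, rfl⟩)
    _ ≤ ℵ₀ + (ℵ₀ + #B) := add_le_add le_rfl hcard
    _ = ℵ₀ + #B := by rw [← add_assoc, aleph0_add_aleph0]

/-- `d(X) ≤ t(X, CL(X), V⁻) ≤ t(CL(X), W_ρ)`. -/
theorem stmt_4 (X : Type u) [MetricSpace X] [Nonempty X] :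
    density X inferInstance ≤
      tightnessAt (CL X) (lowerVietoris X)
        ⟨Set.univ, Set.univ_nonempty, isClosed_univ⟩ ∧
    tightnessAt (CL X) (lowerVietoris X)
        ⟨Set.univ, Set.univ_nonempty, isClosed_univ⟩ ≤
      tightness (CL X) (wijsman X ‹MetricSpace X›) := by
  refine ⟨density_le_tightnessAt X, ?_⟩
  refine (tightnessAt_congr _ _ _ _ (nhds_univ_eq X)).le.trans ?_
  exact le_ciSup (f := fun y => tightnessAt (CL X) (wijsman X _) y)
    (bddAbove_of_small) (univCL X)
end

section
/- Let (X,ρ) be a metric space. Then the density of the hyperspace (CL(X), W_ρ) is at most the density of X, i.e. d(CL(X), W_ρ) ≤ d(X). -/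
/-!
If `D` is dense in `X`, the nonempty finite subsets of `D` are dense in the Wijsman hyperspace.
Indeed, given a closed `A`, finitely many points `x ∈ I` and `ε > 0`, choose for every `x` a point
`a ∈ A` nearly realising `ρ(x, A)` and a point of `D` close to `a`; the finite set of these points
of `D` has distance to each `x ∈ I` within `ε` of `ρ(x, A)`: the upper bound comes from the
near-minimiser, the lower one from all chosen points being close to `A`. Finally, `D` has at
most `ℵ₀ + #D` finite subsets.
-/

open Cardinal Set Metric Topology

universe u v

/-- The Wijsman topology is induced by `A ↦ ρ(·, A)` from the topology of pointwise convergence. -/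
lemma wijsman_eq_induced_pi (X : Type u) [MetricSpace X] :
    wijsman X ‹MetricSpace X› =
      TopologicalSpace.induced (fun (A : CL X) (x : X) => infDist x A.1) Pi.topologicalSpace := by
  simp only [wijsman, Pi.topologicalSpace, induced_iInf, induced_compose]
  rfl

/-- The nonempty finite subsets of `D`, as points of the hyperspace. -/
def finiteCL {X : Type u} [MetricSpace X] (D : Set X) : Set (CL X) :=
  {B | ∃ F : Finset D, B.1 = Subtype.val '' (F : Set D)}

lemma mk_finiteCL_le {X : Type u} [MetricSpace X] (D : Set X) :
    #(finiteCL D) ≤ ℵ₀ + #D := by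
  have h1 : #(finiteCL D) ≤ #(Finset D) := by
    choose F hF using fun B : finiteCL D => B.2
    refine Cardinal.mk_le_of_injective (f := F) fun B C h => ?_
    apply Subtype.ext
    apply Subtype.ext
    rw [hF B, hF C, h]
  refine h1.trans ?_
  rcases finite_or_infinite D with hD | hD
  · exact (Cardinal.lt_aleph0_of_finite _).le.trans (self_le_add_right _ _)
  · rw [Cardinal.mk_finset_of_infinite]
    exact self_le_add_left _ _

/-- A set `F` within `ε / 2` of `A` containing an almost nearest point of `A` to `x` has almost
the same distance to `x` as `A`. -/
lemma infDist_close {X : Type u} [MetricSpace X] {A F : Set X} {x : X} {ε : ℝ} (hε : 0 < ε)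
    (hA : ∀ p ∈ F, ∃ a ∈ A, dist a p < ε / 2)
    (hx : ∃ p ∈ F, dist x p < infDist x A + ε) :
    infDist x F ∈ ball (infDist x A) ε := by
  obtain ⟨p, hp, hxp⟩ := hx
  have h1 : infDist x F ≤ dist x p := infDist_le_dist_of_mem hp
  have h2 : infDist x A - ε / 2 ≤ infDist x F := by
    refine (le_infDist ⟨p, hp⟩).2 fun q hq => ?_
    obtain ⟨a, ha, haq⟩ := hA q hq
    have h3 : infDist x A ≤ dist x a := infDist_le_dist_of_mem ha
    have h4 := dist_triangle x q a
    rw [dist_comm q a] at h4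
    linarith
  rw [mem_ball, Real.dist_eq, abs_lt]
  constructor <;> linarith

lemma dense_finiteCL {X : Type u} [MetricSpace X] {D : Set X} (hD : Dense D) :
    @Dense (CL X) (wijsman X ‹MetricSpace X›) (finiteCL D) := by
  classical
  rw [wijsman_eq_induced_pi]
  intro A
  rw [closure_induced, _root_.mem_closure_iff]
  intro O hO hAO
  obtain ⟨I, u, hu, hsub⟩ := isOpen_pi_iff.1 hO _ hAO
  -- one radius that works for all of the finitely many coordinates in `I`
  have hev : ∀ᶠ ε : ℝ in 𝓝[>] 0, ∀ i ∈ I, ball (infDist i A.1) ε ⊆ u i := by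
    refine (Filter.eventually_all_finset I).2 fun i hi => ?_
    obtain ⟨δ, hδ, hb⟩ := Metric.isOpen_iff.1 (hu i hi).1 _ (hu i hi).2
    filter_upwards [Ioo_mem_nhdsGT hδ] with ε hε
    exact (ball_subset_ball hε.2.le).trans hb
  obtain ⟨ε, hball, hε⟩ := (hev.and self_mem_nhdsWithin).exists
  have hε : 0 < ε := hε
  have key : ∀ x : X, ∃ p : D, (∃ a ∈ A.1, dist a p < ε / 2) ∧ dist x p < infDist x A.1 + ε := by
    intro x
    obtain ⟨a, ha, hxa⟩ := (infDist_lt_iff A.2.1).1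
      (show infDist x A.1 < infDist x A.1 + ε / 2 by linarith)
    obtain ⟨p, hp, hap⟩ := hD.exists_dist_lt a (half_pos hε)
    refine ⟨⟨p, hp⟩, ⟨a, ha, hap⟩, ?_⟩
    have := dist_triangle x a p
    change dist x p < _
    linarith
  choose g hgA hgx using key
  obtain ⟨x₀, -⟩ := A.2.1
  -- `x₀` is inserted to keep the set nonempty when `I` is empty
  let F : Finset D := (insert x₀ I).image g
  have hF : (Subtype.val '' (F : Set D)).Nonempty :=
    ⟨g x₀, g x₀, by simp [F], rfl⟩
  let B : CL X := ⟨Subtype.val '' (F : Set D), hF, (F.finite_toSet.image _).isClosed⟩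
  refine ⟨fun x => infDist x B.1, hsub fun i hi => hball i hi ?_, B, ⟨F, rfl⟩, rfl⟩
  refine infDist_close hε ?_ ⟨g i, ⟨g i, ?_, rfl⟩, hgx i⟩
  · rintro _ ⟨q, hq, rfl⟩
    obtain ⟨y, -, rfl⟩ := Finset.mem_image.1 (Finset.mem_coe.1 hq)
    exact hgA y
  · exact Finset.mem_coe.2 (Finset.mem_image_of_mem g (Finset.mem_insert_of_mem hi))

/-- `d(CL(X), W_ρ) ≤ d(X)`. -/
theorem stmt_6 (X : Type u) [MetricSpace X] :
    density (CL X) (wijsman X ‹MetricSpace X›) ≤ density X inferInstance := by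
  have hne : { c : Cardinal.{u} | ∃ D : Set X, Dense D ∧ #↥D = c }.Nonempty :=
    ⟨_, univ, dense_univ, rfl⟩
  obtain ⟨D, hD, hc⟩ := csInf_mem hne
  have h1 : sInf { c : Cardinal.{u} | ∃ E : Set (CL X),
      @Dense (CL X) (wijsman X ‹MetricSpace X›) E ∧ #↥E = c } ≤ ℵ₀ + #D :=
    le_trans (csInf_le' ⟨finiteCL D, dense_finiteCL hD, rfl⟩) (mk_finiteCL_le D)
  unfold density
  refine (add_le_add_right h1 ℵ₀).trans ?_
  rw [← add_assoc, Cardinal.aleph0_add_aleph0, hc]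
end

section
/- Let (X,ρ) be a metric space. Then the hereditary density of (CL(X), W_ρ) equals the density of X, i.e. hd(CL(X), W_ρ) = d(X), where hd(Y) = sup{d(Z) : Z a subspace of Y}. -/
/-! The singletons of `X` form a subspace of the Wijsman hyperspace homeomorphic to `X`, because
`ρ(x, {a}) = ρ(x, a)`; this gives `d(X) ≤ hd(CL(X))` (`density_le_density_singletons`).

Conversely, let `D` be dense in `X`. As `x ↦ ρ(x, A)` is 1-Lipschitz, the sets
`{A : q < ρ(d, A) < r}` with `d ∈ D` and `q, r` rational form a subbase of the Wijsman topology, so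
this topology has a base indexed by finite lists of triples `(d, q, r)`. Choosing a point of a
subspace in each base set that meets it yields a dense subset of that subspace of cardinality at
most `ℵ₀ + |D|` (`density_sub_le`). -/

open Cardinal Set Metric Topology

universe u v

theorem aleph0_le_density (Y : Type u) (t : TopologicalSpace Y) : ℵ₀ ≤ density Y t :=
  self_le_add_right _ _

theorem density_le_of_dense {Y : Type u} {t : TopologicalSpace Y} {D : Set Y}
    (hD : @Dense Y t D) {c : Cardinal.{u}} (h0 : ℵ₀ ≤ c) (hc : #↥D ≤ c) :
    density Y t ≤ c := by
  have h : #↥D ∈ { c : Cardinal.{u} | ∃ D : Set Y, @Dense Y t D ∧ #↥D = c } := ⟨D, hD, rfl⟩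
  exact add_le_of_le h0 h0 ((csInf_le' h).trans hc)

theorem exists_dense_mk_le_density (Y : Type u) (t : TopologicalSpace Y) :
    ∃ D : Set Y, @Dense Y t D ∧ #↥D ≤ density Y t := by
  obtain ⟨D, hD, h⟩ := csInf_mem (s := { c : Cardinal.{u} | ∃ D : Set Y, @Dense Y t D ∧ #↥D = c })
    ⟨_, univ, @dense_univ Y t, rfl⟩
  exact ⟨D, hD, h ▸ self_le_add_left _ _⟩

theorem wijsman_eq_induced (X : Type u) [m : MetricSpace X] :
    wijsman X m = TopologicalSpace.induced
      (fun (A : CL X) (x : X) => Metric.infDist x A.1) inferInstance := by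
  unfold wijsman
  rw [induced_to_pi]

/-- The basic Wijsman-open set coded by a finite list of triples `(d, q, r)`: the closed sets `A`
with `q < ρ(d, A) < r` for each triple. -/
def basicSet {X : Type u} [MetricSpace X] {D : Set X} (l : List (D × ℚ × ℚ)) : Set (CL X) :=
  {A | ∀ p ∈ l, (p.2.1 : ℝ) < Metric.infDist p.1.1 A.1 ∧ Metric.infDist p.1.1 A.1 < p.2.2}

theorem exists_basicSet_subset {X : Type u} [m : MetricSpace X] {D : Set X} (hD : Dense D)
    {U : Set (CL X)} (hU : IsOpen[wijsman X m] U) {A : CL X} (hA : A ∈ U) :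
    ∃ l : List (D × ℚ × ℚ), A ∈ basicSet l ∧ basicSet l ⊆ U := by
  rw [wijsman_eq_induced, isOpen_induced_iff] at hU
  obtain ⟨V, hV, rfl⟩ := hU
  obtain ⟨I, u, hu, hIu⟩ := isOpen_pi_iff.1 hV _ hA
  have key : ∀ i : I, ∃ p : D × ℚ × ℚ,
      ((p.2.1 : ℝ) < Metric.infDist p.1.1 A.1 ∧ Metric.infDist p.1.1 A.1 < p.2.2) ∧
      ∀ B : CL X, (p.2.1 : ℝ) < Metric.infDist p.1.1 B.1 → Metric.infDist p.1.1 B.1 < p.2.2 →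
        Metric.infDist i.1 B.1 ∈ u i := by
    rintro ⟨i, hi⟩
    obtain ⟨ε, hε, hball⟩ := Metric.isOpen_iff.1 (hu i hi).1 _ (hu i hi).2
    obtain ⟨d, hd, hdi⟩ := hD.exists_dist_lt i (ε := ε / 4) (by positivity)
    obtain ⟨q, hq1, hq2⟩ := exists_rat_btwn
      (show Metric.infDist d A.1 - ε / 4 < Metric.infDist d A.1 by linarith)
    obtain ⟨r, hr1, hr2⟩ := exists_rat_btwn
      (show Metric.infDist d A.1 < Metric.infDist d A.1 + ε / 4 by linarith)
    refine ⟨⟨⟨d, hd⟩, q, r⟩, ⟨hq2, hr1⟩, fun B hB1 hB2 => hball ?_⟩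
    simp only at hB1 hB2
    -- Replacing `i` by `d` costs at most `ε / 4` for each of `A` and `B`.
    have h1 := Metric.infDist_le_infDist_add_dist (s := A.1) (x := i) (y := d)
    have h2 := Metric.infDist_le_infDist_add_dist (s := A.1) (x := d) (y := i)
    have h3 := Metric.infDist_le_infDist_add_dist (s := B.1) (x := i) (y := d)
    have h4 := Metric.infDist_le_infDist_add_dist (s := B.1) (x := d) (y := i)
    rw [dist_comm d i] at h2 h4
    rw [Metric.mem_ball, Real.dist_eq, abs_lt]
    constructor <;> linarith
  choose p hp hpB using key
  refine ⟨I.attach.toList.map p, ?_, ?_⟩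
  · intro x hx
    obtain ⟨i, -, rfl⟩ := List.mem_map.1 hx
    exact hp i
  · intro B hB
    refine hIu fun i hi => ?_
    have := hB (p ⟨i, hi⟩) (List.mem_map.2 ⟨_, by simp, rfl⟩)
    exact hpB ⟨i, hi⟩ B this.1 this.2

theorem density_sub_le (X : Type u) [m : MetricSpace X] (S : Set (CL X)) :
    density ↥S (subTop (wijsman X m) S) ≤ density X inferInstance := by
  obtain ⟨D, hD, hDc⟩ := exists_dense_mk_le_density X inferInstance
  have h0 := aleph0_le_density X inferInstance
  let L := {l : List (D × ℚ × ℚ) // ∃ A : S, A.1 ∈ basicSet l}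
  choose f hf using fun l : L => l.2
  refine density_le_of_dense (D := range f) ?_ h0 ?_
  · let := wijsman X m
    let := subTop (wijsman X m) S
    rw [dense_iff_inter_open]
    rintro U hU ⟨A, hA⟩
    obtain ⟨V, hV, rfl⟩ := isOpen_induced_iff.1 hU
    obtain ⟨l, hAl, hlV⟩ := exists_basicSet_subset hD hV hA
    exact ⟨f ⟨l, A, hAl⟩, hlV (hf ⟨l, A, hAl⟩), mem_range_self _⟩
  · refine mk_range_le.trans ((mk_subtype_le _).trans ((mk_list_le_max _).trans (max_le h0 ?_)))
    rw [mk_prod, mk_eq_aleph0 (ℚ × ℚ), lift_uzero, lift_aleph0]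
    exact mul_le_of_le h0 hDc h0

/-- The singleton `{x}` as a point of the hyperspace. -/
def singletonCL {X : Type u} [MetricSpace X] (x : X) : CL X :=
  ⟨{x}, singleton_nonempty x, isClosed_singleton⟩

theorem density_le_density_singletons (X : Type u) [m : MetricSpace X] :
    density X inferInstance ≤
      density ↥(range (singletonCL (X := X))) (subTop (wijsman X m) _) := by
  obtain ⟨E, hE, hEc⟩ := exists_dense_mk_le_density _
    (subTop (wijsman X m) (range (singletonCL (X := X))))
  let g : X → range (singletonCL (X := X)) := fun x => ⟨singletonCL x, mem_range_self x⟩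
  have hg : Function.Injective g := fun x y h =>
    singleton_injective (congrArg (fun A => A.1.1) h)
  refine density_le_of_dense (D := g ⁻¹' E) ?_ (aleph0_le_density _ _)
    ((mk_preimage_of_injective g E hg).trans hEc)
  rw [Metric.dense_iff]
  intro x ε hε
  let := wijsman X m
  let := subTop (wijsman X m) (range (singletonCL (X := X)))
  -- The singletons `{y}` with `ρ(x, y) < ε` form an open subset of the subspace.
  have hopen : IsOpen {A : range (singletonCL (X := X)) | Metric.infDist x A.1.1 < ε} := by
    refine isOpen_induced_iff.2 ⟨{A : CL X | Metric.infDist x A.1 < ε}, ?_, rfl⟩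
    have : IsOpen[wijsman X m] {A : CL X | Metric.infDist x A.1 < ε} := by
      rw [wijsman_eq_induced]
      exact isOpen_induced_iff.2 ⟨{h | h x < ε}, isOpen_lt (continuous_apply x) continuous_const,
        rfl⟩
    exact this
  obtain ⟨⟨_, y, rfl⟩, hy, hyE⟩ := dense_iff_inter_open.1 hE _ hopen
    ⟨g x, by simpa [g, singletonCL] using hε⟩
  refine ⟨y, ?_, hyE⟩
  rw [Metric.mem_ball, dist_comm]
  simpa [singletonCL] using hy

/-- `hd(CL(X), W_ρ) = d(X)`. -/
theorem stmt_7 (X : Type u) [MetricSpace X] :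
    hered density (CL X) (wijsman X ‹MetricSpace X›) = density X inferInstance := by
  apply le_antisymm
  · exact ciSup_le' fun S => density_sub_le X S
  · exact (density_le_density_singletons X).trans
      (le_ciSup (f := fun S : Set (CL X) => density ↥S (subTop (wijsman X _) S))
        (bddAbove_of_small) _)
end

section
/- Let ε > 0 and let (X,ρ) be a metric space in which ρ(x,y) = ε for all distinct points x,y ∈ X (a 0–ε metric). If (CL(X), W_ρ) is a normal topological space, then X is countable. -/
/-!
In a 0–ε metric, `ρ(x, A)` is `0` when `x ∈ A` and `ε` otherwise, so `CL X` with the Wijsman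
topology is the Cantor cube `2^X` with the point `∅` removed. For any `A ⊆ X` the singletons
`{x}`, `x ∈ A`, form a closed set (`isClosed_singletons`), since the only accumulation point
of the singletons in the cube is `∅`.

Suppose `X` is uncountable, let `A` be an infinite countable subset and `B` its complement.
Let `U ⊇ {{x} : x ∈ A}` and `V ⊇ {{y} : y ∈ B}` be open. Each `{x}` has a basic neighborhood
inside `U` consisting of the sets that contain `x` and miss a finite set `F x`
(`exists_finite_avoid`), and likewise each `{y}` with a finite set `G y` and `V`. As `⋃ F x`
over `x ∈ A` is countable, some `y ∈ B` lies outside it; as `G y` is finite, some `x ∈ A` lies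
outside `G y`. Then `{x, y} ∈ U ∩ V`, so `U` and `V` are not disjoint.
-/

open Cardinal Set Metric Topology

universe u v

section ZeroEps

variable {X : Type u} [MetricSpace X] {ε : ℝ}

lemma infDist_eq_eps (hd : ∀ x y : X, x ≠ y → dist x y = ε) {x : X} {S : Set X}
    (hS : S.Nonempty) (hx : x ∉ S) : infDist x S = ε := by
  apply le_antisymm
  · obtain ⟨s, hs⟩ := hS
    rw [← hd x s (fun h => hx (h ▸ hs))]
    exact infDist_le_dist_of_mem hs
  · rw [le_infDist hS]
    intro y hy
    exact (hd x y (fun h => hx (h ▸ hy))).ge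

lemma continuous_infDist_wijsman (x : X) :
    @Continuous (CL X) ℝ (wijsman X ‹MetricSpace X›) _ (fun S => infDist x S.1) :=
  continuous_iff_le_induced.2 (iInf_le _ x)

lemma nhds_wijsman (P : CL X) :
    @nhds (CL X) (wijsman X ‹MetricSpace X›) P =
      ⨅ y : X, Filter.comap (fun S : CL X => infDist y S.1) (𝓝 (infDist y P.1)) :=
  nhds_iInf.trans (iInf_congr fun _ => nhds_induced _ _)

lemma isOpen_mem (hε : 0 < ε) (hd : ∀ x y : X, x ≠ y → dist x y = ε) (x : X) :
    @IsOpen (CL X) (wijsman X ‹MetricSpace X›) {S | x ∈ S.1} := by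
  let _ := wijsman X ‹MetricSpace X›
  have : {S : CL X | x ∈ S.1} = (fun S : CL X => infDist x S.1) ⁻¹' Iio ε := by
    ext S
    by_cases h : x ∈ S.1
    · simp [h, infDist_zero_of_mem h, hε]
    · simp [h, infDist_eq_eps hd S.2.1 h]
  rw [this]
  exact isOpen_Iio.preimage (continuous_infDist_wijsman x)

/-- The singletons `{x}` with `x ∈ A`, as a subset of the hyperspace `CL X`; a nonempty set is
such a singleton exactly when it is a subsingleton contained in `A`. -/
def singletons (A : Set X) : Set (CL X) := {S | S.1.Subsingleton ∧ S.1 ⊆ A}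

/-- Both "being a subsingleton" and "being contained in `A`" are intersections of conditions
that only test membership of one or two points. -/
lemma isClosed_singletons (hε : 0 < ε) (hd : ∀ x y : X, x ≠ y → dist x y = ε) (A : Set X) :
    @IsClosed (CL X) (wijsman X ‹MetricSpace X›) (singletons A) := by
  let _ := wijsman X ‹MetricSpace X›
  have : singletons A = (⋂ (x : X) (y : X) (_ : x ≠ y), {S : CL X | x ∈ S.1 ∧ y ∈ S.1}ᶜ) ∩
      ⋂ (x : X) (_ : x ∉ A), {S : CL X | x ∈ S.1}ᶜ := by
    ext S
    simp only [singletons, Set.Subsingleton, Set.subset_def, mem_ofPred_eq, mem_inter_iff,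
      mem_iInter, mem_compl_iff]
    grind
  rw [this]
  refine IsClosed.inter ?_ ?_
  · refine isClosed_iInter fun x => isClosed_iInter fun y => isClosed_iInter fun _ => ?_
    exact ((isOpen_mem hε hd x).inter (isOpen_mem hε hd y)).isClosed_compl
  · refine isClosed_iInter fun x => isClosed_iInter fun _ => ?_
    exact (isOpen_mem hε hd x).isClosed_compl

/-- Basic neighborhoods of the singleton `{x}` in the Wijsman topology. -/
lemma exists_finite_avoid (hd : ∀ x y : X, x ≠ y → dist x y = ε) {U : Set (CL X)}
    (hU : @IsOpen (CL X) (wijsman X ‹MetricSpace X›) U) {x : X} {P : CL X} (hP : P.1 = {x})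
    (hPU : P ∈ U) :
    ∃ F : Set X, F.Finite ∧ x ∉ F ∧ ∀ S : CL X, x ∈ S.1 → Disjoint S.1 F → S ∈ U := by
  let _ := wijsman X ‹MetricSpace X›
  -- The filter generated by the level sets of the distance functionals through `{x}` refines
  -- the neighborhood filter of `{x}`.
  have hle : (⨅ y : X, Filter.principal {S : CL X | infDist y S.1 = infDist y P.1}) ≤ 𝓝 P := by
    refine le_of_le_of_eq ?_ (nhds_wijsman P).symm
    refine iInf_mono fun y => ?_
    rw [← Filter.map_le_iff_le_comap, Filter.map_principal]
    refine le_trans ?_ (pure_le_nhds _)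
    rw [← Filter.principal_singleton, Filter.principal_mono]
    rintro _ ⟨S, hS, rfl⟩
    exact hS
  obtain ⟨t, ht, htU⟩ :=
    (Filter.hasBasis_iInf_principal_finite _).mem_iff.1 (hle (hU.mem_nhds hPU))
  refine ⟨t \ {x}, ht.subset sdiff_subset, by simp, fun S hxS hS => htU ?_⟩
  simp only [mem_iInter, mem_ofPred_eq]
  intro y hy
  by_cases hyx : y = x
  · subst hyx
    rw [infDist_zero_of_mem hxS, infDist_zero_of_mem (by simp [hP])]
  · rw [infDist_eq_eps hd S.2.1 fun h => Set.disjoint_left.1 hS h ⟨hy, hyx⟩,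
      infDist_eq_eps hd P.2.1 (by simpa [hP] using hyx)]

end ZeroEps

/-- if `ρ` is a `0-ε` metric and `(CL(X), W_ρ)` is normal, then `X` is
countable. -/
theorem stmt_10 (X : Type u) [MetricSpace X] (ε : ℝ) (hε : 0 < ε)
    (hd : ∀ x y : X, x ≠ y → dist x y = ε)
    (hn : @NormalSpace (CL X) (wijsman X ‹MetricSpace X›)) :
    Countable X := by
  by_contra hX
  rw [not_countable_iff] at hX
  let _ := wijsman X ‹MetricSpace X›
  obtain ⟨f, hf⟩ : ∃ f : ℕ → X, Function.Injective f :=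
    ⟨_, (Infinite.natEmbedding X).injective⟩
  have hdisj : Disjoint (singletons (range f)) (singletons (range f)ᶜ) := by
    rw [Set.disjoint_left]
    rintro S ⟨-, h1⟩ ⟨-, h2⟩
    obtain ⟨s, hs⟩ := S.2.1
    exact h2 hs (h1 hs)
  obtain ⟨U, V, hU, hV, hAU, hBV, hUV⟩ :=
    hn.normal _ _ (isClosed_singletons hε hd _) (isClosed_singletons hε hd _) hdisj
  let P : X → CL X := fun x => ⟨{x}, singleton_nonempty x, isClosed_singleton⟩
  choose F hFfin hfF hF using fun n => exists_finite_avoid hd hU (P := P (f n)) rfl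
    (hAU ⟨subsingleton_singleton, singleton_subset_iff.2 (mem_range_self n)⟩)
  obtain ⟨y, hy⟩ : ∃ y, y ∉ range f ∪ ⋃ n, F n := by
    by_contra! h
    have hc : (range f ∪ ⋃ n, F n).Countable :=
      (countable_range f).union (countable_iUnion fun n => (hFfin n).countable)
    rw [eq_univ_of_forall h] at hc
    exact not_countable (countable_univ_iff.1 hc)
  simp only [mem_union, mem_iUnion, not_or, not_exists] at hy
  obtain ⟨G, hGfin, hyG, hG⟩ := exists_finite_avoid hd hV (P := P y) rfl
    (hBV ⟨subsingleton_singleton, singleton_subset_iff.2 hy.1⟩)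
  obtain ⟨_, ⟨n, rfl⟩, hn'⟩ := (infinite_range_of_injective hf).exists_notMem_finite hGfin
  let Q : CL X := ⟨{f n, y}, by simp, (Set.toFinite _).isClosed⟩
  refine Set.disjoint_left.1 hUV (hF n Q ?_ ?_) (hG Q ?_ ?_)
  · simp [Q]
  · simp [Q, hfF n, hy.2 n]
  · simp [Q]
  · simp [Q, hn', hyG]
end

section
/- Let (X,ρ) be a metric space. For η > 0 let ρ_η be the uniformly equivalent metric defined by ρ_η(x,y) = min{ρ(x,y), η}. If for every ε > 0 there exists η ∈ (0,ε) such that (CL(X), W_{ρ_η}) is a normal topological space, then X is separable. -/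
/-!
If `X` is not separable, then for some `ε > 0` it contains an uncountable set `S` whose points are
pairwise at distance at least `ε`. Take `η < ε / 2` with `W_{ρ_η}` normal, and split `S` into
a countably infinite `K` and an uncountable `L`. The families of nonempty subsets of `K` and of `L`
are disjoint and Wijsman closed (`isClosed_wijsman_subsets`), so normality puts them into disjoint
open sets `U` and `V`.

Every point of `X` is at `ρ`-distance less than `η` from at most one point of `S`; adding a point
`l ∈ S` to `{k}` therefore leaves a given functional `ρ_η(x, ·)` unchanged for all but at most one
`l`, so `{k, l}` tends to `{k}` along the cofinite filter on `S` (`tendsto_pair`). Hence for each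
`k ∈ K` all but finitely many `l ∈ L` have `{k, l} ∈ U`, and for each `l ∈ L` all but finitely many
`k ∈ K` have `{k, l} ∈ V`. As `K` is countable and `L` is not, some `l` is good for every `k ∈ K`;
as `K` is infinite, some `k ∈ K` is good for this `l`. Then `{k, l} ∈ U ∩ V`, a contradiction.
-/

open Cardinal Set Metric Topology

universe u v

/-- The truncated metric `ρ_η(x,y) = min (ρ(x,y)) η`, uniformly equivalent to `ρ`. -/
noncomputable def truncMetric (X : Type u) (m : MetricSpace X) (η : ℝ) (hη : 0 < η) :
    MetricSpace X :=
  letI := m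
  { dist := fun x y => min (dist x y) η
    dist_self := fun x => by simp [dist_self, hη.le]
    dist_comm := fun x y => by simp [dist_comm]
    dist_triangle := fun x y z => by
      have h1 := dist_triangle x y z
      have h2 : (0:ℝ) ≤ dist x y := dist_nonneg
      have h3 : (0:ℝ) ≤ dist y z := dist_nonneg
      simp only [min_def]
      split_ifs <;> linarith
    eq_of_dist_eq_zero := by
      intro x y h
      refine eq_of_dist_eq_zero ?_
      rcases min_eq_iff.1 h with ⟨h', _⟩ | ⟨h', _⟩
      · exact h'
      · exact absurd h' hη.ne' }

/-- The subsets of a closed set `K` form a Wijsman closed family: `A ⊆ K` holds exactly when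
`ρ_η(x, K) ≤ ρ_η(x, A)` for all `x`. -/
theorem isClosed_wijsman_subsets {X : Type u} [m : MetricSpace X] {η : ℝ} (hη : 0 < η)
    {K : Set X} (hK : IsClosed K) (hne : K.Nonempty) :
    @IsClosed (CL X) (wijsman X (truncMetric X m η hη)) {A | A.1 ⊆ K} := by
  let _ := wijsman X (truncMetric X m η hη)
  have hset : {A : CL X | A.1 ⊆ K} =
      ⋂ x : X, {A : CL X | @infDist X (truncMetric X m η hη).toPseudoMetricSpace x K ≤
        @infDist X (truncMetric X m η hη).toPseudoMetricSpace x A.1} := by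
    ext A
    simp only [mem_ofPred_eq, mem_iInter]
    constructor
    · intro hA x
      exact @infDist_le_infDist_of_subset X (truncMetric X m η hη).toPseudoMetricSpace _ _ x
        hA A.2.1
    · intro hA a ha
      have h0 := hA a
      rw [@infDist_zero_of_mem X (truncMetric X m η hη).toPseudoMetricSpace _ _ ha] at h0
      rw [← hK.closure_eq, Metric.mem_closure_iff]
      intro δ hδ
      obtain ⟨b, hb, hab⟩ :=
        (@infDist_lt_iff X (truncMetric X m η hη).toPseudoMetricSpace _ a (min δ η) hne).1
          (h0.trans_lt (lt_min hδ hη))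
      have hab' : min (dist a b) η < min δ η := hab
      refine ⟨b, hb, ?_⟩
      by_contra hcon
      exact absurd hab' (not_lt.2 (min_le_min_right η (not_lt.1 hcon)))
  rw [hset]
  refine isClosed_iInter fun x => isClosed_le continuous_const ?_
  exact continuous_iInf_dom continuous_induced_dom

/-- The set `{k, l}` as an element of the hyperspace; `pairCL k k` is the singleton `{k}`. -/
def pairCL {X : Type u} [MetricSpace X] (k l : X) : CL X :=
  ⟨{k, l}, insert_nonempty _ _, (Set.toFinite _).isClosed⟩

/-- For each `x`, at most one `l` in the `ε`-separated set `S` has `ρ(x, l) < η ≤ ε / 2`, and for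
the others `ρ_η(x, {k, l}) = ρ_η(x, {k})`; here `{k}` appears as `pairCL k k`. -/
theorem tendsto_pair {X : Type u} [m : MetricSpace X] {η ε : ℝ} (hη : 0 < η) (hηε : η ≤ ε / 2)
    {S : Set X} (hS : S.Pairwise fun x y => ε ≤ dist x y) (k : X) :
    Filter.Tendsto (fun l : S => pairCL k (l : X)) Filter.cofinite
      (@nhds _ (wijsman X (truncMetric X m η hη)) (pairCL k k)) := by
  rw [wijsman, nhds_iInf, Filter.tendsto_iInf]
  intro x
  rw [nhds_induced, Filter.tendsto_comap_iff]
  refine Filter.Tendsto.congr' (f₁ := fun _ => @infDist X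
    (truncMetric X m η hη).toPseudoMetricSpace x (pairCL k k).1) ?_ tendsto_const_nhds
  have hsub : {l : S | dist x l < η}.Subsingleton := by
    intro a ha b hb
    by_contra hne
    have h1 := hS a.2 b.2 (fun h => hne (Subtype.ext h))
    have h2 := dist_triangle_left (a : X) b x
    simp only [mem_ofPred_eq] at ha hb
    linarith
  filter_upwards [hsub.finite.compl_mem_cofinite] with l hl
  have hl' : η ≤ dist x l := not_lt.1 hl
  simp only [Function.comp, pairCL, pair_eq_singleton]
  rw [@infDist_singleton X (truncMetric X m η hη).toPseudoMetricSpace]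
  apply le_antisymm
  · rw [@le_infDist X (truncMetric X m η hη).toPseudoMetricSpace _ _ _ (insert_nonempty _ _)]
    rintro y (rfl | rfl)
    · exact le_rfl
    · exact (min_le_right _ _).trans (le_min hl' le_rfl)
  · exact @infDist_le_dist_of_mem X (truncMetric X m η hη).toPseudoMetricSpace _ _ _
      (mem_insert k _)

theorem pairCL_comm {X : Type u} [MetricSpace X] (k l : X) : pairCL k l = pairCL l k :=
  Subtype.ext (pair_comm k l)

/-- An uncountable `ε`-separated set obstructs normality for the metric `ρ_η`, `η ≤ ε / 2`. -/
theorem not_normal_of_uncountable {X : Type u} [m : MetricSpace X] {η ε : ℝ} (hη : 0 < η)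
    (hηε : η ≤ ε / 2) {S : Set X} (hS : S.Pairwise fun x y => ε ≤ dist x y)
    (hunc : ¬ S.Countable) :
    ¬ @NormalSpace (CL X) (wijsman X (truncMetric X m η hη)) := by
  intro hN
  have hε : 0 < ε := by linarith
  obtain ⟨K, hKS, hKc, hKinf⟩ :=
    Set.Infinite.exists_subset_countable_infinite (fun hfin : S.Finite => hunc hfin.countable)
  have hLunc : ¬ (S \ K).Countable := fun hL =>
    hunc ((hL.union hKc).mono (by rw [sdiff_union_self]; exact subset_union_left))
  have hLne : (S \ K).Nonempty := by
    by_contra hcon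
    rw [not_nonempty_iff_eq_empty] at hcon
    exact hLunc (hcon ▸ countable_empty)
  have hclosed : ∀ T ⊆ S, IsClosed T := fun T hT =>
    isClosed_of_pairwise_le_dist hε (hS.mono hT)
  let _ := wijsman X (truncMetric X m η hη)
  have hdisj : Disjoint {A : CL X | A.1 ⊆ K} {A : CL X | A.1 ⊆ S \ K} := by
    rw [Set.disjoint_left]
    intro A hA hA'
    obtain ⟨a, ha⟩ := A.2.1
    exact (hA' ha).2 (hA ha)
  obtain ⟨U, V, hU, hV, hKU, hLV, hUV⟩ := hN.normal _ _
    (isClosed_wijsman_subsets hη (hclosed K hKS) hKinf.nonempty)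
    (isClosed_wijsman_subsets hη (hclosed _ sdiff_subset) hLne) hdisj
  have hgoodU : ∀ k ∈ K, {l : S | pairCL k (l : X) ∉ U}.Finite := fun k hk =>
    tendsto_pair hη hηε hS k (hU.mem_nhds (hKU (pair_subset hk hk)))
  have hgoodV : ∀ l ∈ S \ K, {k : S | pairCL l (k : X) ∉ V}.Finite := fun l hl =>
    tendsto_pair hη hηε hS l (hV.mem_nhds (hLV (pair_subset hl hl)))
  have hbad : (⋃ k ∈ K, Subtype.val '' {l : S | pairCL k (l : X) ∉ U}).Countable :=
    hKc.biUnion fun k hk => ((hgoodU k hk).image _).countable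
  obtain ⟨l, hl, hlgood⟩ : ∃ l ∈ S \ K,
      l ∉ ⋃ k ∈ K, Subtype.val '' {l : S | pairCL k (l : X) ∉ U} :=
    not_subset.1 fun hsub => hLunc (hbad.mono hsub)
  obtain ⟨k, hk, hkgood⟩ := hKinf.exists_notMem_finite ((hgoodV l hl).image Subtype.val)
  have h1 : pairCL k l ∈ U := by
    by_contra hcon
    exact hlgood (mem_biUnion hk ⟨⟨l, hl.1⟩, hcon, rfl⟩)
  have h2 : pairCL l k ∈ V := by
    by_contra hcon
    exact hkgood ⟨⟨k, hKS hk⟩, hcon, rfl⟩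
  rw [pairCL_comm] at h2
  exact Set.disjoint_left.1 hUV h1 h2

theorem exists_separated_net (X : Type u) [MetricSpace X] {ε : ℝ} (hε : 0 < ε) :
    ∃ S : Set X, (S.Pairwise fun x y => ε ≤ dist x y) ∧ ∀ x, ∃ y ∈ S, dist x y ≤ ε := by
  obtain ⟨S, hS⟩ := zorn_subset {S : Set X | S.Pairwise fun x y => ε ≤ dist x y}
    fun c hc hchain =>
      ⟨⋃₀ c, (pairwise_sUnion hchain.directedOn).2 fun s hs => hc hs,
        fun s hs => subset_sUnion_of_mem hs⟩
  refine ⟨S, hS.prop, fun x => ?_⟩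
  by_contra! hcon
  have hins : (insert x S).Pairwise fun x y => ε ≤ dist x y :=
    hS.prop.insert fun y hy _ => ⟨(hcon y hy).le, by rw [dist_comm]; exact (hcon y hy).le⟩
  have hx : x ∈ S := hS.le_of_ge hins (subset_insert x S) (mem_insert x S)
  have := hcon x hx
  rw [dist_self] at this
  linarith

/-- if for every `ε > 0` there is `η ∈ (0,ε)` such that
`(CL(X), W_{ρ_η})` is normal, then `X` is separable. -/
theorem stmt_12 (X : Type u) [MetricSpace X]
    (h : ∀ ε > (0:ℝ), ∃ η, ∃ hη : 0 < η, η < ε ∧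
      @NormalSpace (CL X) (wijsman X (truncMetric X ‹MetricSpace X› η hη))) :
    TopologicalSpace.SeparableSpace X := by
  have : SecondCountableTopology X := Metric.secondCountable_of_almost_dense_set fun ε hε => by
    obtain ⟨S, hS, hnet⟩ := exists_separated_net X hε
    refine ⟨S, ?_, hnet⟩
    by_contra hunc
    obtain ⟨η, hη, hlt, hN⟩ := h (ε / 2) (half_pos hε)
    exact not_normal_of_uncountable hη hlt.le hS hunc hN
  infer_instance
end

section
/- Let (X,ρ) be a metric space and for η > 0 let ρ_η(x,y) = min{ρ(x,y), η}. The following are equivalent: (1) every proper closed ball of (X,ρ) (i.e. every closed ball B(x,α) = {y : ρ(x,y) ≤ α} with B(x,α) ≠ X) is totally bounded; (2) for every η > 0 the Wijsman topologies W_ρ and W_{ρ_η} coincide on CL(X). -/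
/-!
The truncated distance to a nonempty set `A` is `min (ρ(x, A)) η`, so `W_ρ` always refines
`W_{ρ_η}`, and only the continuity of `ρ(x, ·)` for `W_{ρ_η}` is at stake. Its upper semicontinuity
is automatic, since a point `a` of `A` is detected by the smallness of `ρ_η(a, ·)`.

If proper balls are totally bounded, lower semicontinuity at `A` holds as well: for
`r < r' < ρ(x, A)` the ball `B(x, r')` misses `A`, hence is proper, and finitely many small balls
cover it; keeping the truncated distances from their centers away from `0` keeps the nearby sets
out of `B(x, r')`.

Conversely, a proper ball `B(x, α)` which is not totally bounded contains a sequence `b` that is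
`ε`-separated. With `y` outside the ball and `η = ε / 2`, each point is at truncated distance `η`
from all but at most one `b n`, so the sets `{y, b n}` converge to `{y}` for `W_{ρ_η}`; they do not
for `W_ρ`, because `ρ(x, {y, b n}) ≤ α < ρ(x, y)`.
-/

open Cardinal Set Metric Topology

universe u v

open Filter in
theorem tendsto_wijsman_iff {X : Type u} [TopologicalSpace X] (m : MetricSpace X) {ι : Type*}
    {l : Filter ι} {f : ι → CL X} {A : CL X} :
    Tendsto f l (@nhds _ (wijsman X m) A) ↔
      ∀ x : X, Tendsto (fun i => @Metric.infDist X m.toPseudoMetricSpace x (f i).1) l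
        (𝓝 (@Metric.infDist X m.toPseudoMetricSpace x A.1)) := by
  unfold wijsman
  simp only [nhds_iInf, nhds_induced, tendsto_iInf, tendsto_comap_iff, Function.comp_def]

theorem infDist_truncMetric {X : Type u} [m : MetricSpace X] {η : ℝ} (hη : 0 < η) (x : X)
    {A : Set X} (hA : A.Nonempty) :
    @Metric.infDist X (truncMetric X m η hη).toPseudoMetricSpace x A
      = min (infDist x A) η := by
  -- Both sides have the same strict upper bounds, each witnessed by a point of `A`.
  refine eq_of_forall_gt_iff fun r => ?_
  have key : ∀ m' : MetricSpace X, @Metric.infDist X m'.toPseudoMetricSpace x A < r ↔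
      ∃ y ∈ A, m'.dist x y < r := fun m' => Metric.infDist_lt_iff hA
  rw [key (truncMetric X m η hη), min_lt_iff, Metric.infDist_lt_iff hA]
  change (∃ y ∈ A, min (dist x y) η < r) ↔ _
  simp only [min_lt_iff]
  constructor
  · rintro ⟨y, hy, h | h⟩
    · exact Or.inl ⟨y, hy, h⟩
    · exact Or.inr h
  · rintro (⟨y, hy, h⟩ | h)
    · exact ⟨y, hy, Or.inl h⟩
    · exact ⟨hA.some, hA.some_mem, Or.inr h⟩

theorem wijsman_le_trunc (X : Type u) [MetricSpace X] {η : ℝ} (hη : 0 < η) :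
    wijsman X ‹MetricSpace X› ≤ wijsman X (truncMetric X ‹MetricSpace X› η hη) := by
  refine le_of_nhds_le_nhds fun A => ?_
  refine (tendsto_wijsman_iff (f := id) _).2 fun x => ?_
  have h := (tendsto_wijsman_iff (f := id) (A := A) ‹MetricSpace X›).1 Filter.tendsto_id x
  simp only [id, fun A : CL X => infDist_truncMetric hη x A.2.1] at h ⊢
  exact h.min tendsto_const_nhds

/-- Total boundedness of proper balls makes every functional `ρ(x, ·)` continuous for the
Wijsman topology of the truncated metric. -/
theorem trunc_le_wijsman {X : Type u} [MetricSpace X]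
    (H : ∀ (x : X) (α : ℝ), closedBall x α ≠ Set.univ → TotallyBounded (closedBall x α))
    {η : ℝ} (hη : 0 < η) :
    wijsman X (truncMetric X ‹MetricSpace X› η hη) ≤ wijsman X ‹MetricSpace X› := by
  refine le_of_nhds_le_nhds fun A => ?_
  refine (tendsto_wijsman_iff (f := id) _).2 fun x => ?_
  have h := (tendsto_wijsman_iff (f := id) (A := A)
    (truncMetric X ‹MetricSpace X› η hη)).1 Filter.tendsto_id
  simp only [id, fun (x : X) (A : CL X) => infDist_truncMetric hη x A.2.1] at h ⊢
  refine tendsto_order.2 ⟨fun r hr => ?_, fun r hr => ?_⟩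
  · obtain ⟨r', hr', hr'A⟩ := exists_between hr
    have hproper : closedBall x r' ≠ Set.univ := by
      intro hu
      obtain ⟨a, ha⟩ := A.2.1
      have h1 : a ∈ closedBall x r' := hu ▸ mem_univ a
      rw [mem_closedBall'] at h1
      exact absurd (infDist_le_dist_of_mem (x := x) ha) (by linarith)
    set δ := min (infDist x A.1 - r') η with hδ
    have hδ0 : 0 < δ := lt_min (by linarith) hη
    obtain ⟨t, hts, htf, htc⟩ := finite_approx_of_totallyBounded (H x r' hproper) (δ / 2)
      (half_pos hδ0)
    have hev := (Filter.eventually_all_finite htf).2 fun c hc =>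
      (h c).eventually_const_lt (u := δ / 2) (by
        have h1 : infDist x A.1 ≤ infDist c A.1 + dist x c := infDist_le_infDist_add_dist
        have h2 := hts hc
        rw [mem_closedBall'] at h2
        have h3 : δ ≤ min (infDist c A.1) η := min_le_min (by linarith) le_rfl
        linarith)
    filter_upwards [hev] with B hB
    by_contra hcon
    obtain ⟨b, hb, hxb⟩ := (infDist_lt_iff B.2.1).1 ((not_lt.1 hcon).trans_lt hr')
    obtain ⟨c, hc, hbc⟩ := mem_iUnion₂.1 (htc (mem_closedBall'.2 hxb.le))
    have h1 := (lt_min_iff.1 (hB c hc)).1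
    have h2 : infDist c B.1 ≤ dist c b := infDist_le_dist_of_mem hb
    rw [mem_ball'] at hbc
    linarith
  · obtain ⟨a, ha, hxa⟩ := (infDist_lt_iff A.2.1).1 hr
    have hev := (h a).eventually_lt_const (u := min (r - dist x a) η) (by
      rw [infDist_zero_of_mem ha, min_eq_left hη.le]
      exact lt_min (by linarith) hη)
    filter_upwards [hev] with B hB
    have h1 : infDist a B.1 < r - dist x a := by
      rcases min_lt_iff.1 hB with h | h
      · exact (lt_min_iff.1 h).1
      · exact absurd (lt_min_iff.1 h).2 (lt_irrefl _)
    have h2 : infDist x B.1 ≤ infDist a B.1 + dist x a := infDist_le_infDist_add_dist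
    linarith

theorem exists_separated_seq {X : Type u} [MetricSpace X] {s : Set X} (hs : ¬ TotallyBounded s) :
    ∃ ε > 0, ∃ b : ℕ → X, (∀ n, b n ∈ s) ∧ Pairwise fun i j => ε ≤ dist (b i) (b j) := by
  rw [Metric.totallyBounded_iff] at hs
  push Not at hs
  obtain ⟨ε, hε, hs⟩ := hs
  have : Std.Symm (fun x y : X => ε ≤ dist x y) := ⟨fun x y h => by rwa [dist_comm]⟩
  obtain ⟨b, hb, hsep⟩ := exists_seq_of_forall_finset_exists' (fun x => x ∈ s)
    (fun x y => ε ≤ dist x y) (fun t _ => by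
      obtain ⟨y, hy, hyt⟩ := Set.not_subset.1 (hs t t.finite_toSet)
      refine ⟨y, hy, fun x hx => ?_⟩
      by_contra hlt
      exact hyt (mem_iUnion₂.2 ⟨x, hx, mem_ball'.2 (not_le.1 hlt)⟩))
  exact ⟨ε, hε, b, hb, hsep⟩

/-- every proper closed ball of `(X,ρ)` is totally bounded iff for
every `η > 0` the Wijsman topologies `W_ρ` and `W_{ρ_η}` coincide on `CL(X)`. -/
theorem stmt_14 (X : Type u) [MetricSpace X] :
    (∀ (x : X) (α : ℝ), closedBall x α ≠ Set.univ →
      TotallyBounded (closedBall x α)) ↔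
    (∀ (η : ℝ) (hη : 0 < η),
      wijsman X ‹MetricSpace X› = wijsman X (truncMetric X ‹MetricSpace X› η hη)) := by
  constructor
  · exact fun H η hη => le_antisymm (wijsman_le_trunc X hη) (trunc_le_wijsman H hη)
  · intro H x α hα
    by_contra hnt
    obtain ⟨ε, hε, b, hbs, hb⟩ := exists_separated_seq hnt
    obtain ⟨y, hy⟩ := (Set.ne_univ_iff_exists_notMem _).1 hα
    rw [mem_closedBall', not_le] at hy
    let A : CL X := ⟨{y}, singleton_nonempty y, isClosed_singleton⟩
    let B : ℕ → CL X := fun n => ⟨{y, b n}, insert_nonempty _ _, (toFinite _).isClosed⟩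
    have hlim : Filter.Tendsto B Filter.atTop
        (@nhds _ (wijsman X (truncMetric X ‹MetricSpace X› (ε / 2) (half_pos hε))) A) := by
      refine (tendsto_wijsman_iff _).2 fun z => ?_
      refine tendsto_const_nhds.congr' ?_
      have hfar : ∀ᶠ n in Filter.atTop, ε / 2 ≤ dist z (b n) := by
        by_cases hz : ∃ k, dist z (b k) < ε / 2
        · obtain ⟨k, hk⟩ := hz
          filter_upwards [Filter.eventually_gt_atTop k] with n hn
          have h1 := hb hn.ne
          have h2 := dist_triangle_left (b k) (b n) z
          linarith
        · push Not at hz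
          exact Filter.Eventually.of_forall hz
      filter_upwards [hfar] with n hn
      rw [infDist_truncMetric _ _ A.2.1, infDist_truncMetric _ _ (B n).2.1]
      refine eq_of_forall_gt_iff fun r => ?_
      rw [min_lt_iff, min_lt_iff, infDist_lt_iff A.2.1, infDist_lt_iff (B n).2.1]
      simp only [A, B, mem_singleton_iff, mem_insert_iff, exists_eq_left, exists_eq_or_imp]
      constructor
      · tauto
      · rintro ((h | h) | h)
        · exact Or.inl h
        · exact Or.inr (hn.trans_lt h)
        · exact Or.inr h
    rw [← H (ε / 2) (half_pos hε)] at hlim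
    have hx := (tendsto_wijsman_iff _).1 hlim x
    have hle : infDist x A.1 ≤ α := le_of_tendsto' hx fun n =>
      (infDist_le_dist_of_mem (show b n ∈ (B n).1 from mem_insert_of_mem _ rfl)).trans
        (mem_closedBall'.1 (hbs n))
    rw [show infDist x A.1 = dist x y from infDist_singleton] at hle
    linarith
end
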